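/- arXiv:1104.0195 — 3 statements merged into one kernel-verified Lean document; each statement's English description precedes it below -/
import Mathlib

section
/- For every term M of Λ⊕, the set of distributions derivable for M in the inductive call-by-value small-step semantics is directed: if M ⇒v 𝒟 and M ⇒v ℰ, then there exists a distribution ℱ such that M ⇒v ℱ, 𝒟 ≤ ℱ and ℰ ≤ ℱ. -/
open scoped ENNReal

/-- Terms of Λ⊕ (and of Λ⊕⁺), in de Bruijn notation: variables, abstractions,
applications and binary (probabilistic) sums.  De Bruijn indices realize
"terms up to renaming of bound variables". -/
inductive Term : Type
  | var : ℕ → Term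
  | lam : Term → Term
  | app : Term → Term → Term
  | choice : Term → Term → Term
  deriving DecidableEq

namespace Term

/-- Values: variables and abstractions. -/
inductive IsValue : Term → Prop
  | var (n : ℕ) : IsValue (var n)
  | lam (M : Term) : IsValue (lam M)

/-- Boolean value test. -/
def isVal : Term → Bool
  | var _ => true
  | lam _ => true
  | _ => false

/-- Shifting of de Bruijn indices: add `d` to all indices `≥ c`. -/
def shift (d c : ℕ) : Term → Term
  | var n => if n < c then var n else var (n + d)
  | lam M => lam (shift d (c + 1) M)
  | app M N => app (shift d c M) (shift d c N)
  | choice M N => choice (shift d c M) (shift d c N)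

/-- Capture-avoiding substitution `M[j := N]` (the variable `j` is consumed and
higher indices are decremented, as in a β-step). -/
def subst : Term → ℕ → Term → Term
  | var n, j, N => if n = j then shift j 0 N else if j < n then var (n - 1) else var n
  | lam M, j, N => lam (subst M (j + 1) N)
  | app M L, j, N => app (subst M j N) (subst L j N)
  | choice M L, j, N => choice (subst M j N) (subst L j N)

/-- All free indices are `< n`. -/
def closedUnder : Term → ℕ → Prop
  | var m, n => m < n
  | lam M, n => closedUnder M (n + 1)
  | app M N, n => closedUnder M n ∧ closedUnder N n
  | choice M N, n => closedUnder M n ∧ closedUnder N n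

/-- Closed terms: no free variables. -/
def Closed (M : Term) : Prop := closedUnder M 0

end Term

/-- (Sub)distributions are represented as functions from terms into `ℝ≥0∞`;
genuine distributions (`IsDist`) are supported on values and have mass `≤ 1`. -/
abbrev PDist := Term → ℝ≥0∞

/-- The sum (total mass) `Σ𝒟` of a distribution. -/
noncomputable def dsum (D : PDist) : ℝ≥0∞ := ∑' M, D M

/-- The support of a distribution. -/
def dsupp (D : PDist) : Set Term := {M | D M ≠ 0}

/-- The everywhere-zero distribution `∅`. -/
noncomputable def dzero : PDist := fun _ => 0

/-- The Dirac distribution `{V^1}`. -/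
noncomputable def dirac (V : Term) : PDist := fun M => if M = V then 1 else 0

/-- Being a genuine (sub)probability distribution: supported on values, with
total mass at most one. -/
def IsDist (D : PDist) : Prop := (∀ M, D M ≠ 0 → M.IsValue) ∧ dsum D ≤ 1

/-- Call-by-value reduction `↦v`, relating a term to the (equiprobable) finite
sequence of its possible reducts. -/
inductive RedV : Term → List Term → Prop
  | beta {M V : Term} : V.IsValue → RedV (.app (.lam M) V) [M.subst 0 V]
  | choice {V W : Term} : V.IsValue → W.IsValue → RedV (.choice V W) [V, W]
  | appL {M N : Term} {Ls : List Term} :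
      RedV M Ls → RedV (.app M N) (Ls.map (fun L => .app L N))
  | appR {V M : Term} {Ns : List Term} :
      V.IsValue → RedV M Ns → RedV (.app V M) (Ns.map (fun L => .app V L))
  | choiceL {M N : Term} {Ls : List Term} :
      RedV M Ls → RedV (.choice M N) (Ls.map (fun L => .choice L N))
  | choiceR {V M : Term} {Ns : List Term} :
      V.IsValue → RedV M Ns → RedV (.choice V M) (Ns.map (fun L => .choice V L))

/-- Call-by-name reduction `↦n`. -/
inductive RedN : Term → List Term → Prop
  | beta {M N : Term} : RedN (.app (.lam M) N) [M.subst 0 N]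
  | choice {M N : Term} : RedN (.choice M N) [M, N]
  | appL {M N : Term} {Ls : List Term} :
      RedN M Ls → RedN (.app M N) (Ls.map (fun L => .app L N))

/-- The inductive small-step convergence relation `⇒`, parametric in the
underlying reduction relation: any term evaluates to `∅`; a value `V`
evaluates to `{V^1}`; and if `M ↦ N₁,…,Nₙ` and `Nᵢ ⇒ 𝒟ᵢ` then
`M ⇒ Σᵢ (1/n)𝒟ᵢ`. -/
inductive Conv (Red : Term → List Term → Prop) : Term → PDist → Prop
  | bot (M : Term) : Conv Red M dzero
  | val {V : Term} : V.IsValue → Conv Red V (dirac V)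
  | step {M : Term} {Ns : List Term} (Ds : Fin Ns.length → PDist) :
      Red M Ns → (∀ i, Conv Red (Ns.get i) (Ds i)) →
      Conv Red M (fun W => (∑ i, Ds i W) / (Ns.length : ℝ≥0∞))

/-- Call-by-value small-step convergence `⇒v`. -/
def SmallV : Term → PDist → Prop := Conv RedV

/-- Call-by-name small-step convergence `⇒n`. -/
def SmallN : Term → PDist → Prop := Conv RedN

/-- The small-step semantics `⟦M⟧`: the pointwise supremum of all distributions
derivable for `M`. -/
noncomputable def semOf (S : Term → PDist → Prop) (M : Term) : PDist :=
  fun W => ⨆ (D : PDist) (_ : S M D), D W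

/-- Call-by-value small-step semantics `⟦M⟧v`. -/
noncomputable def semV : Term → PDist := semOf SmallV

/-- Call-by-name small-step semantics `⟦M⟧n`. -/
noncomputable def semN : Term → PDist := semOf SmallN

/-- One-step unfolding of the divergence inference system: a value diverges
with probability `0`; if `M ↦ N₁,…,Nₙ` and `Nᵢ` diverges with probability
`pᵢ`, then `M` diverges with probability `Σᵢ (1/n)pᵢ`. -/
def DivStep (Red : Term → List Term → Prop) (R : Term → ℝ≥0∞ → Prop)
    (M : Term) (p : ℝ≥0∞) : Prop :=
  (M.IsValue ∧ p = 0) ∨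
    ∃ (Ns : List Term) (ps : Fin Ns.length → ℝ≥0∞),
      Red M Ns ∧ (∀ i, R (Ns.get i) (ps i)) ∧ p = (∑ i, ps i) / (Ns.length : ℝ≥0∞)

/-- The coinductively-defined divergence relation `⇓div`: the union of all
consistent relations between terms and probabilities in `[0,1]`. -/
def Diverges (Red : Term → List Term → Prop) (M : Term) (p : ℝ≥0∞) : Prop :=
  ∃ R : Term → ℝ≥0∞ → Prop,
    (∀ N q, R N q → q ≤ 1 ∧ DivStep Red R N q) ∧ R M p

/-- Call-by-value divergence `⇓div`. -/
def DivV : Term → ℝ≥0∞ → Prop := Diverges RedV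

/-- Call-by-name divergence `⇓div,n`. -/
def DivN : Term → ℝ≥0∞ → Prop := Diverges RedN

/-- One-step unfolding of the call-by-value big-step inference system. -/
def BigVStep (R : Term → PDist → Prop) (M : Term) (D : PDist) : Prop :=
  (M.IsValue ∧ D = dirac M) ∨
  (∃ (N L : Term) (E F : PDist) (G : Term → Term → PDist),
      M = .app N L ∧ R N E ∧ R L F ∧
      (∀ P V, E (.lam P) ≠ 0 → V.IsValue → F V ≠ 0 → R (P.subst 0 V) (G P V)) ∧
      D = fun W => ∑' (P : Term), ∑' (V : Term), E (.lam P) * F V * G P V W) ∨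
  (∃ (N L : Term) (E F : PDist),
      M = .choice N L ∧ R N E ∧ R L F ∧
      D = fun W => (E W * dsum F + F W * dsum E) / 2)

/-- The coinductive call-by-value big-step relation `⇓v`: the union of all
consistent relations between terms and distributions. -/
def BigV (M : Term) (D : PDist) : Prop :=
  ∃ R : Term → PDist → Prop,
    (∀ N E, R N E → IsDist E ∧ BigVStep R N E) ∧ R M D

/-- One-step unfolding of the call-by-name big-step inference system. -/
def BigNStep (R : Term → PDist → Prop) (M : Term) (D : PDist) : Prop :=
  (M.IsValue ∧ D = dirac M) ∨
  (∃ (N L : Term) (E : PDist) (F : Term → PDist),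
      M = .app N L ∧ R N E ∧
      (∀ P, E (.lam P) ≠ 0 → R (P.subst 0 L) (F P)) ∧
      D = fun W => ∑' (P : Term), E (.lam P) * F P W) ∨
  (∃ (N L : Term) (E F : PDist),
      M = .choice N L ∧ R N E ∧ R L F ∧ D = fun W => (E W + F W) / 2)

/-- The coinductive call-by-name big-step relation `⇓n`. -/
def BigN (M : Term) (D : PDist) : Prop :=
  ∃ R : Term → PDist → Prop,
    (∀ N E, R N E → IsDist E ∧ BigNStep R N E) ∧ R M D

/-- Big-step semantics `⟪M⟫`: the pointwise infimum of all distributions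
derivable for `M` in a big-step system. -/
noncomputable def bigSemOf (B : Term → PDist → Prop) (M : Term) : PDist :=
  fun W => ⨅ (D : PDist) (_ : B M D), D W

/-!
Call-by-value reduction is deterministic and does not reduce values, so two derivations for `M`
that both apply the step rule pass to the same reducts, and upper bounds for the reducts average to
an upper bound for `M`.  Hence induction on one of the derivations suffices: wherever either of
them has stopped with `∅`, the other one is the upper bound.
-/

/-- The uniform mixture `Σᵢ (1/n)𝒟ᵢ` formed by the rule `Conv.step`.  The empty mixture is
`dzero`, since `0 / 0 = 0` in `ℝ≥0∞`. -/
noncomputable def uniformMix {n : ℕ} (Ds : Fin n → PDist) : PDist :=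
  fun W => (∑ i, Ds i W) / (n : ℝ≥0∞)

theorem uniformMix_mono {n : ℕ} : Monotone (uniformMix (n := n)) := fun _ _ h W =>
  ENNReal.div_le_div_right (Finset.sum_le_sum fun i _ => h i W) _

theorem dzero_le (D : PDist) : dzero ≤ D := fun _ => zero_le

theorem Term.IsValue.not_redV {V : Term} {Ns : List Term} (hV : V.IsValue) : ¬ RedV V Ns := by
  intro h
  cases hV <;> cases h

theorem RedV.rightUnique : Relator.RightUnique RedV := by
  intro M Ns Ks h h'
  induction h generalizing Ks with
  | beta hV =>
    cases h' with
    | beta _ => rfl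
    | appL h' => exact absurd h' (Term.IsValue.lam _).not_redV
    | appR _ h' => exact absurd h' hV.not_redV
  | choice hV hW =>
    cases h' with
    | choice _ _ => rfl
    | choiceL h' => exact absurd h' hV.not_redV
    | choiceR _ h' => exact absurd h' hW.not_redV
  | appL h ih =>
    cases h' with
    | beta _ => exact absurd h (Term.IsValue.lam _).not_redV
    | appL h' => rw [ih h']
    | appR hV _ => exact absurd h hV.not_redV
  | appR hV h ih =>
    cases h' with
    | beta hW => exact absurd h hW.not_redV
    | appL h' => exact absurd h' hV.not_redV
    | appR _ h' => rw [ih h']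
  | choiceL h ih =>
    cases h' with
    | choice hV _ => exact absurd h hV.not_redV
    | choiceL h' => rw [ih h']
    | choiceR hV _ => exact absurd h hV.not_redV
  | choiceR hV h ih =>
    cases h' with
    | choice _ hW => exact absurd h hW.not_redV
    | choiceL h' => exact absurd h' hV.not_redV
    | choiceR _ h' => rw [ih h']

namespace Conv

variable {Red : Term → List Term → Prop}

theorem le_dirac {M : Term} {D : PDist} (hM : ∀ Ns, ¬ Red M Ns) (hD : Conv Red M D) :
    D ≤ dirac M := by
  cases hD with
  | bot => exact dzero_le _
  | val _ => exact le_rfl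
  | step _ hred _ => exact absurd hred (hM _)

theorem exists_le_uniformMix {M : Term} {Ns : List Term} {D : PDist}
    (hdet : Relator.RightUnique Red) (hM : ¬ M.IsValue) (hred : Red M Ns) (hD : Conv Red M D) :
    ∃ Ds : Fin Ns.length → PDist, (∀ i, Conv Red (Ns.get i) (Ds i)) ∧ D ≤ uniformMix Ds := by
  cases hD with
  | bot => exact ⟨fun _ => dzero, fun _ => bot _, dzero_le _⟩
  | val hV => exact absurd hV hM
  | step Ds hred' hDs =>
    obtain rfl := hdet hred hred'
    exact ⟨Ds, hDs, le_rfl⟩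

theorem directedOn (hdet : Relator.RightUnique Red)
    (hval : ∀ V : Term, V.IsValue → ∀ Ns, ¬ Red V Ns) (M : Term) :
    DirectedOn (· ≤ ·) {D | Conv Red M D} := by
  intro D hD E hE
  induction hD generalizing E with
  | bot => exact ⟨E, hE, dzero_le E, le_rfl⟩
  | val hV => exact ⟨_, val hV, le_rfl, hE.le_dirac (hval _ hV)⟩
  | step Ds hred _ ih =>
    obtain ⟨Es, hEs, hE_le⟩ := hE.exists_le_uniformMix hdet (fun hV => hval _ hV _ hred) hred
    choose Fs hFs hDF hEF using fun i => ih i (Es i) (hEs i)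
    exact ⟨uniformMix Fs, step Fs hred hFs, uniformMix_mono hDF,
      hE_le.trans (uniformMix_mono hEF)⟩

end Conv

/-- the set of distributions derivable for `M` in the inductive
call-by-value small-step semantics is directed. -/
theorem smallV_directed (M : Term) (D E : PDist)
    (hD : SmallV M D) (hE : SmallV M E) :
    ∃ F : PDist, SmallV M F ∧ D ≤ F ∧ E ≤ F :=
  Conv.directedOn RedV.rightUnique (fun _ hV _ => hV.not_redV) M D hD E hE
end

section
/- For every closed term M of Λ⊕, if M ⇓div p and M ⇒v 𝒟, then p + Σ𝒟 ≤ 1. -/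
open scoped ENNReal

/-!
A convergence derivation is finite, so one can induct on it while unfolding the coinductive
divergence hypothesis one step at a time. Reduction is deterministic and values are irreducible, so
the two derivations always unfold to the same reducts, and the bound `p + Σ𝒟 ≤ 1`, being stable
under averaging, passes from the reducts to the term. At the leaves it is `p + 0 ≤ 1` for `∅` and
`0 + 1 ≤ 1` for a value.
-/

namespace RedV

theorem not_isValue {M : Term} {Ns : List Term} (h : RedV M Ns) : ¬ M.IsValue := by
  intro hM
  cases h <;> cases hM

theorem rightUnique_s1 : Relator.RightUnique RedV := by
  intro M Ks Ls hK hL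
  induction hK generalizing Ls with
  | beta hV =>
    cases hL with
    | beta => rfl
    | appL hL => exact absurd (.lam _) hL.not_isValue
    | appR _ hL => exact absurd hV hL.not_isValue
  | choice hV hW =>
    cases hL with
    | choice => rfl
    | choiceL hL => exact absurd hV hL.not_isValue
    | choiceR _ hL => exact absurd hW hL.not_isValue
  | appL hK ih =>
    cases hL with
    | beta => exact absurd (.lam _) hK.not_isValue
    | appL hL => rw [ih hL]
    | appR hV => exact absurd hV hK.not_isValue
  | appR hV hK ih =>
    cases hL with
    | beta hW => exact absurd hW hK.not_isValue
    | appL hL => exact absurd hV hL.not_isValue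
    | appR _ hL => rw [ih hL]
  | choiceL hK ih =>
    cases hL with
    | choice hV => exact absurd hV hK.not_isValue
    | choiceL hL => rw [ih hL]
    | choiceR hV => exact absurd hV hK.not_isValue
  | choiceR hV hK ih =>
    cases hL with
    | choice _ hW => exact absurd hW hK.not_isValue
    | choiceL hL => exact absurd hV hL.not_isValue
    | choiceR _ hL => rw [ih hL]

end RedV

theorem dsum_dzero : dsum dzero = 0 := by
  simp [dsum, dzero]

theorem dsum_dirac (V : Term) : dsum (dirac V) = 1 := by
  simp [dsum, dirac]

theorem dsum_sum_div {ι : Type*} (s : Finset ι) (Ds : ι → PDist) (c : ℝ≥0∞) :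
    dsum (fun W => (∑ i ∈ s, Ds i W) / c) = (∑ i ∈ s, dsum (Ds i)) / c := by
  simp only [dsum, div_eq_mul_inv]
  rw [ENNReal.tsum_mul_right, Summable.tsum_finsetSum fun _ _ => ENNReal.summable]

section Divergence

variable {Red : Term → List Term → Prop} {M : Term} {p : ℝ≥0∞}

theorem DivStep.mono {R S : Term → ℝ≥0∞ → Prop} (hRS : ∀ N q, R N q → S N q)
    (h : DivStep Red R M p) : DivStep Red S M p :=
  h.imp_right fun ⟨Ns, ps, hred, hps, hp⟩ => ⟨Ns, ps, hred, fun i => hRS _ _ (hps i), hp⟩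

namespace Diverges

theorem le_one (h : Diverges Red M p) : p ≤ 1 :=
  let ⟨_, hR, hp⟩ := h
  (hR _ _ hp).1

theorem divStep (h : Diverges Red M p) : DivStep Red (Diverges Red) M p :=
  let ⟨R, hR, hp⟩ := h
  (hR _ _ hp).2.mono fun _ _ hq => ⟨R, hR, hq⟩

theorem eq_zero_of_irreducible (h : Diverges Red M p) (hM : ∀ Ns, ¬ Red M Ns) : p = 0 := by
  obtain ⟨_, hp⟩ | ⟨Ns, _, hred, _⟩ := h.divStep
  · exact hp
  · exact absurd hred (hM Ns)

theorem exists_eq_average {Ns : List Term} (h : Diverges Red M p)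
    (hdet : Relator.RightUnique Red) (hM : ¬ M.IsValue) (hred : Red M Ns) :
    ∃ ps : Fin Ns.length → ℝ≥0∞,
      (∀ i, Diverges Red (Ns.get i) (ps i)) ∧ p = (∑ i, ps i) / (Ns.length : ℝ≥0∞) := by
  obtain ⟨hV, _⟩ | ⟨Ks, ps, hred', hps, hp⟩ := h.divStep
  · exact absurd hV hM
  · obtain rfl := hdet hred hred'
    exact ⟨ps, hps, hp⟩

end Diverges

theorem divV_add_conv_le_one_general {D : PDist} (hdet : Relator.RightUnique Red)
    (hval : ∀ N Ns, Red N Ns → ¬ N.IsValue) (hdiv : Diverges Red M p) (hconv : Conv Red M D) :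
    p + dsum D ≤ 1 := by
  induction hconv generalizing p with
  | bot => simpa only [dsum_dzero, add_zero] using hdiv.le_one
  | val hV =>
    have hp : p = 0 := hdiv.eq_zero_of_irreducible fun Ns hred => hval _ Ns hred hV
    rw [hp, dsum_dirac, zero_add]
  | @step M Ns Ds hred _ ih =>
    obtain ⟨ps, hps, rfl⟩ := hdiv.exists_eq_average hdet (hval _ _ hred) hred
    calc (∑ i, ps i) / (Ns.length : ℝ≥0∞)
          + dsum (fun W => (∑ i, Ds i W) / (Ns.length : ℝ≥0∞))
        = (∑ i, (ps i + dsum (Ds i))) / (Ns.length : ℝ≥0∞) := by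
          rw [dsum_sum_div, ← ENNReal.add_div, Finset.sum_add_distrib]
      _ ≤ (∑ _i : Fin Ns.length, 1) / (Ns.length : ℝ≥0∞) := by
          gcongr with i
          exact ih i (hps i)
      _ ≤ 1 := by simp [ENNReal.div_self_le_one]

end Divergence

/-- divergence and convergence probabilities together never
exceed `1`. -/
theorem divV_add_conv_le_one (M : Term) (hM : M.Closed) (p : ℝ≥0∞) (D : PDist)
    (hdiv : DivV M p) (hconv : SmallV M D) :
    p + dsum D ≤ 1 :=
  divV_add_conv_le_one_general RedV.rightUnique_s1 (fun _ _ h => h.not_isValue) hdiv hconv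
end

section
/- For every closed term M of Λ⊕, if M ⇒v 𝒟 and M ⇓v ℰ, then 𝒟 ≤ ℰ: every distribution derivable in the inductive call-by-value small-step semantics is dominated by every distribution derivable in the coinductive call-by-value big-step semantics. -/
open scoped ENNReal

/-!
Big-step convergence can be pulled back along a reduction step: if `M ↦v N₁,…,Nₙ` and `M ⇓v ℰ`,
then `ℰ = Σᵢ (1/n)ℰᵢ` for some `ℰᵢ` with `Nᵢ ⇓v ℰᵢ`. In the two base cases the operands are values
and can only evaluate to Dirac distributions. In the four context cases the distribution of an
application or a sum is linear in that of the operand being reduced, so the decomposition of the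
operand carries over to the whole term. Domination then follows by induction on the derivation of
`M ⇒v 𝒟`, whose average is taken over the same reducts.
-/

section ListMean

/-- The arithmetic mean `Σᵢ (1/n) xᵢ` of a list, with which the reducts of a term are weighted.
For the empty list it is `∞ • 0 = 0`. -/
noncomputable def listMean {α : Type*} [AddCommMonoid α] [Module ℝ≥0∞ α] (xs : List α) : α :=
  (xs.length : ℝ≥0∞)⁻¹ • xs.sum

variable {α β : Type*} [AddCommMonoid α] [Module ℝ≥0∞ α] [AddCommMonoid β] [Module ℝ≥0∞ β]

theorem listMean_singleton (x : α) : listMean [x] = x := by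
  simp [listMean]

theorem listMean_ofFn {n : ℕ} (f : Fin n → α) :
    listMean (List.ofFn f) = (n : ℝ≥0∞)⁻¹ • ∑ i, f i := by
  simp [listMean, List.sum_ofFn]

theorem map_listMean (φ : α →ₗ[ℝ≥0∞] β) (xs : List α) :
    φ (listMean xs) = listMean (xs.map φ) := by
  simp [listMean, map_list_sum]

theorem listMean_le_listMean [PartialOrder α] [IsOrderedAddMonoid α] [PosSMulMono ℝ≥0∞ α]
    {xs ys : List α} (h : List.Forall₂ (· ≤ ·) xs ys) : listMean xs ≤ listMean ys := by
  unfold listMean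
  rw [h.length_eq]
  exact smul_le_smul_of_nonneg_left h.sum_le_sum zero_le

end ListMean

theorem dsupp_subset_dsupp_listMean {Ds : List PDist} {D : PDist} (hD : D ∈ Ds) :
    dsupp D ⊆ dsupp (listMean Ds) := by
  intro W hW
  have hsum : Ds.sum W ≠ 0 := fun h => hW (le_zero_iff.1 (h ▸ List.le_sum_of_mem hD W))
  exact mul_ne_zero (ENNReal.inv_ne_zero.2 (ENNReal.natCast_ne_top _)) hsum

theorem dsum_add (D E : PDist) : dsum (D + E) = dsum D + dsum E :=
  ENNReal.tsum_add

theorem dsum_smul (c : ℝ≥0∞) (D : PDist) : dsum (c • D) = c * dsum D :=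
  ENNReal.tsum_mul_left

/-- The distribution of an application: `E` and `F` are the distributions of the function and of
the argument, and `G P V` is that of the body `P` instantiated with `V`. It is bilinear
in `E` and `F`. -/
noncomputable def appDist (G : Term → Term → PDist) : PDist →ₗ[ℝ≥0∞] PDist →ₗ[ℝ≥0∞] PDist :=
  LinearMap.mk₂ ℝ≥0∞ (fun E F W => ∑' (P : Term), ∑' (V : Term), E (.lam P) * F V * G P V W)
    (fun E₁ E₂ F => by
      funext W
      simp only [Pi.add_apply, add_mul, ENNReal.tsum_add])
    (fun c E F => by
      funext W
      simp only [Pi.smul_apply, smul_eq_mul, mul_assoc, ENNReal.tsum_mul_left])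
    (fun E F₁ F₂ => by
      funext W
      simp only [Pi.add_apply, mul_add, add_mul, ENNReal.tsum_add])
    (fun c E F => by
      funext W
      simp only [Pi.smul_apply, smul_eq_mul, mul_assoc, mul_left_comm _ c,
        ENNReal.tsum_mul_left])

theorem appDist_apply (G : Term → Term → PDist) (E F : PDist) (W : Term) :
    appDist G E F W = ∑' (P : Term), ∑' (V : Term), E (.lam P) * F V * G P V W :=
  rfl

theorem appDist_dirac_lam_dirac (G : Term → Term → PDist) (M V : Term) :
    appDist G (dirac (.lam M)) (dirac V) = G M V := by
  funext W
  simp [appDist_apply, dirac]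

theorem dsum_appDist (G : Term → Term → PDist) (E F : PDist) :
    dsum (appDist G E F) = ∑' (P : Term), ∑' (V : Term), E (.lam P) * F V * dsum (G P V) := by
  simp only [dsum, appDist_apply, ← ENNReal.tsum_mul_left]
  rw [ENNReal.tsum_comm]
  exact tsum_congr fun P => ENNReal.tsum_comm

/-- The distribution of a sum whose operands have distributions `E` and `F`. It is bilinear
in `E` and `F`. -/
noncomputable def choiceDist : PDist →ₗ[ℝ≥0∞] PDist →ₗ[ℝ≥0∞] PDist :=
  LinearMap.mk₂ ℝ≥0∞ (fun E F W => (E W * dsum F + F W * dsum E) / 2)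
    (fun E₁ E₂ F => by
      funext W
      simp only [Pi.add_apply, dsum_add, div_eq_mul_inv]
      ring)
    (fun c E F => by
      funext W
      simp only [Pi.smul_apply, smul_eq_mul, dsum_smul, div_eq_mul_inv]
      ring)
    (fun E F₁ F₂ => by
      funext W
      simp only [Pi.add_apply, dsum_add, div_eq_mul_inv]
      ring)
    (fun c E F => by
      funext W
      simp only [Pi.smul_apply, smul_eq_mul, dsum_smul, div_eq_mul_inv]
      ring)

theorem choiceDist_apply (E F : PDist) (W : Term) :
    choiceDist E F W = (E W * dsum F + F W * dsum E) / 2 :=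
  rfl

theorem choiceDist_dirac_dirac (V W : Term) :
    choiceDist (dirac V) (dirac W) = listMean [dirac V, dirac W] := by
  funext X
  simp [choiceDist_apply, dsum_dirac, listMean, div_eq_mul_inv, mul_comm]

theorem dsum_choiceDist (E F : PDist) : dsum (choiceDist E F) = dsum E * dsum F := by
  calc dsum (choiceDist E F) = (dsum E * dsum F + dsum F * dsum E) / 2 := by
        simp only [dsum, choiceDist_apply, div_eq_mul_inv, ENNReal.tsum_mul_right,
          ENNReal.tsum_add]
    _ = dsum E * dsum F := by
        rw [mul_comm (dsum F), ENNReal.add_div, ENNReal.add_halves]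

theorem isDist_appDist {E F : PDist} {G : Term → Term → PDist} (hE : IsDist E) (hF : IsDist F)
    (hG : ∀ P V, E (.lam P) ≠ 0 → F V ≠ 0 → IsDist (G P V)) : IsDist (appDist G E F) := by
  constructor
  · intro W hW
    simp only [appDist_apply, ne_eq, ENNReal.tsum_eq_zero, not_forall] at hW
    obtain ⟨P, V, hPV⟩ := hW
    obtain ⟨⟨hP, hV⟩, hGW⟩ : (E (.lam P) ≠ 0 ∧ F V ≠ 0) ∧ G P V W ≠ 0 := by
      simpa only [mul_ne_zero_iff] using hPV
    exact (hG P V hP hV).1 W hGW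
  · have dsum_G_le (P V : Term) : E (.lam P) * F V * dsum (G P V) ≤ E (.lam P) * F V := by
      by_cases h : E (.lam P) ≠ 0 ∧ F V ≠ 0
      · exact mul_le_of_le_one_right' (hG P V h.1 h.2).2
      · rw [← mul_ne_zero_iff, not_not] at h
        simp [h]
    calc dsum (appDist G E F)
        = ∑' (P : Term), ∑' (V : Term), E (.lam P) * F V * dsum (G P V) := dsum_appDist G E F
      _ ≤ ∑' (P : Term), ∑' (V : Term), E (.lam P) * F V :=
          ENNReal.tsum_le_tsum fun P => ENNReal.tsum_le_tsum fun V => dsum_G_le P V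
      _ = (∑' P : Term, E (.lam P)) * dsum F := by
          simp only [ENNReal.tsum_mul_left, ENNReal.tsum_mul_right, dsum]
      _ ≤ dsum E * dsum F := by
          gcongr
          exact ENNReal.tsum_comp_le_tsum_of_injective (fun _ _ => Term.lam.inj) E
      _ ≤ 1 := mul_le_one' hE.2 hF.2

theorem isDist_choiceDist {E F : PDist} (hE : IsDist E) (hF : IsDist F) :
    IsDist (choiceDist E F) := by
  refine ⟨fun W hW => ?_, (dsum_choiceDist E F).trans_le (mul_le_one' hE.2 hF.2)⟩
  by_contra hval
  have hEW : E W = 0 := not_imp_comm.1 (hE.1 W) hval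
  have hFW : F W = 0 := not_imp_comm.1 (hF.1 W) hval
  exact hW (by simp [choiceDist_apply, hEW, hFW])

theorem BigVStep.mono {R S : Term → PDist → Prop} (hRS : ∀ M D, R M D → S M D) {M : Term}
    {D : PDist} (h : BigVStep R M D) : BigVStep S M D := by
  rcases h with hval | ⟨N, L, E, F, G, hM, hE, hF, hG, hD⟩ | ⟨N, L, E, F, hM, hE, hF, hD⟩
  · exact .inl hval
  · exact .inr (.inl ⟨N, L, E, F, G, hM, hRS _ _ hE, hRS _ _ hF,
      fun P V hP hV hFV => hRS _ _ (hG P V hP hV hFV), hD⟩)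
  · exact .inr (.inr ⟨N, L, E, F, hM, hRS _ _ hE, hRS _ _ hF, hD⟩)

theorem bigV_iff {M : Term} {D : PDist} : BigV M D ↔ IsDist D ∧ BigVStep BigV M D := by
  have unfold_bigV {N : Term} {E : PDist} (h : BigV N E) : IsDist E ∧ BigVStep BigV N E := by
    obtain ⟨R, hR, hNE⟩ := h
    exact (hR N E hNE).imp_right (.mono fun _ _ h => ⟨R, hR, h⟩)
  refine ⟨unfold_bigV, fun h => ⟨fun N E => IsDist E ∧ BigVStep BigV N E, ?_, h⟩⟩
  exact fun N E hNE => hNE.imp_right (.mono fun _ _ => unfold_bigV)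

namespace BigV

variable {M N L V : Term} {D E F : PDist} {G : Term → Term → PDist}

theorem isDist (h : BigV M D) : IsDist D :=
  (bigV_iff.1 h).1

theorem app (hE : BigV N E) (hF : BigV L F)
    (hG : ∀ P V, E (.lam P) ≠ 0 → F V ≠ 0 → BigV (P.subst 0 V) (G P V)) :
    BigV (.app N L) (appDist G E F) :=
  bigV_iff.2 ⟨isDist_appDist hE.isDist hF.isDist fun P V hP hV => (hG P V hP hV).isDist,
    .inr (.inl ⟨N, L, E, F, G, rfl, hE, hF, fun P V hP _ hV => hG P V hP hV, rfl⟩)⟩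

theorem choice (hE : BigV N E) (hF : BigV L F) : BigV (.choice N L) (choiceDist E F) :=
  bigV_iff.2 ⟨isDist_choiceDist hE.isDist hF.isDist, .inr (.inr ⟨N, L, E, F, rfl, hE, hF, rfl⟩)⟩

theorem eq_dirac (hV : V.IsValue) (h : BigV V D) : D = dirac V := by
  rcases (bigV_iff.1 h).2 with ⟨_, hD⟩ | ⟨_, _, _, _, _, rfl, _⟩ | ⟨_, _, _, _, rfl, _⟩
  · exact hD
  · cases hV
  · cases hV

theorem exists_eq_appDist (h : BigV (.app N L) D) :
    ∃ E F G, BigV N E ∧ BigV L F ∧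
      (∀ P V, E (.lam P) ≠ 0 → F V ≠ 0 → BigV (P.subst 0 V) (G P V)) ∧ D = appDist G E F := by
  rcases (bigV_iff.1 h).2 with ⟨⟨⟩, _⟩ | ⟨_, _, E, F, G, ⟨⟩, hE, hF, hG, hD⟩ | ⟨_, _, _, _, ⟨⟩, _⟩
  exact ⟨E, F, G, hE, hF, fun P V hP hV => hG P V hP (hF.isDist.1 V hV) hV, hD⟩

theorem exists_eq_choiceDist (h : BigV (.choice N L) D) :
    ∃ E F, BigV N E ∧ BigV L F ∧ D = choiceDist E F := by
  rcases (bigV_iff.1 h).2 with ⟨⟨⟩, _⟩ | ⟨_, _, _, _, _, ⟨⟩, _⟩ | ⟨_, _, E, F, ⟨⟩, hE, hF, hD⟩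
  exact ⟨E, F, hE, hF, hD⟩

end BigV

/-- Big-step convergence of a list of equiprobable terms: each term converges to some
distribution, and `D` is the mean of these. -/
def BigVMean (Ns : List Term) (D : PDist) : Prop :=
  ∃ Ds : List PDist, List.Forall₂ BigV Ns Ds ∧ D = listMean Ds

namespace BigVMean

variable {Ns : List Term} {D : PDist}

-- The support condition lets the premises `G` of an application be reused for each reduct.
theorem map {C : Term → Term} {φ : PDist →ₗ[ℝ≥0∞] PDist} (h : BigVMean Ns D)
    (hC : ∀ N E, BigV N E → dsupp E ⊆ dsupp D → BigV (C N) (φ E)) :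
    BigVMean (Ns.map C) (φ D) := by
  obtain ⟨Ds, hDs, rfl⟩ := h
  refine ⟨Ds.map φ, ?_, map_listMean φ Ds⟩
  rw [List.forall₂_map_left_iff, List.forall₂_map_right_iff]
  obtain ⟨hlen, hzip⟩ := List.forall₂_iff_zip.1 hDs
  refine List.forall₂_iff_zip.2 ⟨hlen, fun {N E} hNE => ?_⟩
  exact hC N E (hzip hNE) (dsupp_subset_dsupp_listMean (List.of_mem_zip hNE).2)

theorem average_le {Ds : Fin Ns.length → PDist} (h : BigVMean Ns D)
    (hDs : ∀ i E, BigV (Ns.get i) E → Ds i ≤ E) :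
    (fun W => (∑ i, Ds i W) / (Ns.length : ℝ≥0∞)) ≤ D := by
  obtain ⟨Es, hEs, rfl⟩ := h
  obtain ⟨hlen, hget⟩ := List.forall₂_iff_get.1 hEs
  have hle : List.Forall₂ (· ≤ ·) (List.ofFn Ds) Es := by
    refine List.forall₂_iff_get.2 ⟨by simp [hlen], fun i hi hi' => ?_⟩
    simpa using hDs ⟨i, hlen ▸ hi'⟩ _ (hget i (hlen ▸ hi') hi')
  calc (fun W => (∑ i, Ds i W) / (Ns.length : ℝ≥0∞)) = listMean (List.ofFn Ds) := by
        funext W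
        simp [listMean_ofFn, div_eq_mul_inv, mul_comm]
    _ ≤ listMean Es := listMean_le_listMean hle

end BigVMean

theorem BigV.bigVMean_of_redV {M : Term} {Ns : List Term} {D : PDist} (h : BigV M D)
    (hred : RedV M Ns) : BigVMean Ns D := by
  induction hred generalizing D with
  | @beta M V hV =>
    obtain ⟨E, F, G, hE, hF, hG, rfl⟩ := h.exists_eq_appDist
    obtain rfl := hE.eq_dirac (.lam M)
    obtain rfl := hF.eq_dirac hV
    have hGMV : BigV (M.subst 0 V) (G M V) := hG M V (by simp [dirac]) (by simp [dirac])
    exact ⟨[G M V], .cons hGMV .nil, by rw [appDist_dirac_lam_dirac, listMean_singleton]⟩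
  | @choice V W hV hW =>
    obtain ⟨E, F, hE, hF, rfl⟩ := h.exists_eq_choiceDist
    obtain rfl := hE.eq_dirac hV
    obtain rfl := hF.eq_dirac hW
    exact ⟨_, .cons hE (.cons hF .nil), choiceDist_dirac_dirac V W⟩
  | appL _ ih =>
    obtain ⟨E, F, G, hE, hF, hG, rfl⟩ := h.exists_eq_appDist
    exact (ih hE).map (φ := (appDist G).flip F) fun _ _ hE' hsupp =>
      hE'.app hF fun P V hP hV => hG P V (hsupp hP) hV
  | appR _ _ ih =>
    obtain ⟨E, F, G, hE, hF, hG, rfl⟩ := h.exists_eq_appDist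
    exact (ih hF).map (φ := appDist G E) fun _ _ hF' hsupp =>
      hE.app hF' fun P V hP hV => hG P V hP (hsupp hV)
  | choiceL _ ih =>
    obtain ⟨E, F, hE, hF, rfl⟩ := h.exists_eq_choiceDist
    exact (ih hE).map (φ := choiceDist.flip F) fun _ _ hE' _ => hE'.choice hF
  | choiceR _ _ ih =>
    obtain ⟨E, F, hE, hF, rfl⟩ := h.exists_eq_choiceDist
    exact (ih hF).map (φ := choiceDist E) fun _ _ hF' _ => hE.choice hF'

theorem bigV_dominates_smallV_general {M : Term} {D E : PDist} (hsmall : SmallV M D)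
    (hbig : BigV M E) : D ≤ E := by
  induction hsmall generalizing E with
  | bot M => exact fun _ => zero_le
  | val hV => exact (hbig.eq_dirac hV).ge
  | step Ds hred _ ih => exact (hbig.bigVMean_of_redV hred).average_le fun i _ => ih i

/-- big-step dominates small-step, call-by-value. -/
theorem bigV_dominates_smallV (M : Term) (hM : M.Closed) (D E : PDist)
    (hsmall : SmallV M D) (hbig : BigV M E) :
    D ≤ E :=
  bigV_dominates_smallV_general hsmall hbig
end
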